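/- Work in the polynomial ring ℤ[α_1,…,α_n,β_1,…,β_n] with n ≥ 4. Then T_4(α−β) = T_4(α) + T_4(β) − T_1(α)·T_3(β) − T_1(β)·T_3(α) + T_2(α)·T_2(β) − T_1(α)·T_1(β)·T_1(αβ) + T_1(αβ)·T_2(α) + T_1(αβ)·T_2(β) − T_1(α)·T_1(α²β) + T_1(α)·T_1(αβ²) + T_1(β)·T_1(α²β) − T_1(β)·T_1(αβ²) + T_1(α³β) − T_1(α²β²) + T_1(αβ³) + T_2(αβ). -/

import Mathlib

/-!
Adjoining an index `i` to a family `f` changes `e_{k+1}(f)` by `f i * e_k(f)`. Hence, by induction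
on the family, the expansion of `e_{k+1}(α - β)` follows from that of `e_k(α - β)`, and each
induction step is a polynomial identity in `α i`, `β i` and the symmetric functions involved.
-/

/-- The `l`-th elementary symmetric polynomial of the values `v 0, …, v (n-1)`. -/
noncomputable def esym {R : Type*} [CommRing R] {n : ℕ} (l : ℕ) (v : Fin n → R) : R :=
  ∑ S ∈ Finset.powersetCard l (Finset.univ : Finset (Fin n)), ∏ i ∈ S, v i

/-- The variables `α_1, …, α_n` of `ℤ[α_1,…,α_n,β_1,…,β_n]`. -/
noncomputable def av (n : ℕ) : Fin n → MvPolynomial (Fin n ⊕ Fin n) ℤ :=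
  fun i => MvPolynomial.X (Sum.inl i)

/-- The variables `β_1, …, β_n` of `ℤ[α_1,…,α_n,β_1,…,β_n]`. -/
noncomputable def bv (n : ℕ) : Fin n → MvPolynomial (Fin n ⊕ Fin n) ℤ :=
  fun i => MvPolynomial.X (Sum.inr i)

theorem esym_eq_multiset_esymm {R : Type*} [CommRing R] {n : ℕ} (l : ℕ) (v : Fin n → R) :
    esym l v = (Finset.univ.val.map v).esymm l :=
  (Finset.esymm_map_val v Finset.univ l).symm

section MultisetEsymm

variable {R : Type*} [CommSemiring R]

theorem multiset_esymm_one (s : Multiset R) : s.esymm 1 = s.sum := by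
  simp [Multiset.esymm, Multiset.powersetCard_one]

theorem multiset_zero_esymm_succ (k : ℕ) : (0 : Multiset R).esymm (k + 1) = 0 := by
  simp [Multiset.esymm, Multiset.powersetCard_zero_right]

theorem multiset_esymm_cons_succ (a : R) (s : Multiset R) (k : ℕ) :
    (a ::ₘ s).esymm (k + 1) = s.esymm (k + 1) + a * s.esymm k := by
  simp [Multiset.esymm, Multiset.sum_map_mul_left]

end MultisetEsymm

section MapSub

variable {ι R : Type*} [CommRing R] (s : Multiset ι) (a b : ι → R)

theorem multiset_esymm_two_map_sub :
    (s.map fun i => a i - b i).esymm 2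
      = (s.map a).esymm 2 + (s.map b).esymm 2 - (s.map a).sum * (s.map b).sum
        + (s.map fun i => a i * b i).sum := by
  induction s using Multiset.induction_on with
  | empty => simp [multiset_zero_esymm_succ]
  | cons i s ih =>
    simp only [Multiset.map_cons, Multiset.sum_cons, multiset_esymm_cons_succ _ _ 1,
      multiset_esymm_one, Multiset.sum_map_sub, ih]
    ring

theorem multiset_esymm_three_map_sub :
    (s.map fun i => a i - b i).esymm 3
      = (s.map a).esymm 3 - (s.map b).esymm 3
        - (s.map a).esymm 2 * (s.map b).sum + (s.map a).sum * (s.map b).esymm 2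
        + (s.map fun i => a i * b i).sum * ((s.map a).sum - (s.map b).sum)
        - (s.map fun i => a i ^ 2 * b i).sum + (s.map fun i => a i * b i ^ 2).sum := by
  induction s using Multiset.induction_on with
  | empty => simp [multiset_zero_esymm_succ]
  | cons i s ih =>
    simp only [Multiset.map_cons, Multiset.sum_cons, multiset_esymm_cons_succ _ _ 1,
      multiset_esymm_cons_succ _ _ 2, multiset_esymm_one, multiset_esymm_two_map_sub, ih]
    ring

theorem statement9_general :
    (s.map fun i => a i - b i).esymm 4
      = (s.map a).esymm 4 + (s.map b).esymm 4
        - (s.map a).sum * (s.map b).esymm 3 - (s.map b).sum * (s.map a).esymm 3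
        + (s.map a).esymm 2 * (s.map b).esymm 2
        - (s.map a).sum * (s.map b).sum * (s.map fun i => a i * b i).sum
        + (s.map fun i => a i * b i).sum * (s.map a).esymm 2
        + (s.map fun i => a i * b i).sum * (s.map b).esymm 2
        - (s.map a).sum * (s.map fun i => a i ^ 2 * b i).sum
        + (s.map a).sum * (s.map fun i => a i * b i ^ 2).sum
        + (s.map b).sum * (s.map fun i => a i ^ 2 * b i).sum
        - (s.map b).sum * (s.map fun i => a i * b i ^ 2).sum
        + (s.map fun i => a i ^ 3 * b i).sum
        - (s.map fun i => a i ^ 2 * b i ^ 2).sum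
        + (s.map fun i => a i * b i ^ 3).sum
        + (s.map fun i => a i * b i).esymm 2 := by
  induction s using Multiset.induction_on with
  | empty => simp [multiset_zero_esymm_succ]
  | cons i s ih =>
    simp only [Multiset.map_cons, Multiset.sum_cons, multiset_esymm_cons_succ _ _ 1,
      multiset_esymm_cons_succ _ _ 2, multiset_esymm_cons_succ _ _ 3, multiset_esymm_one,
      multiset_esymm_three_map_sub, ih]
    ring

end MapSub

theorem statement9 (n : ℕ) (hn : 4 ≤ n) :
    esym 4 (fun i => av n i - bv n i)
      = esym 4 (av n) + esym 4 (bv n)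
        - esym 1 (av n) * esym 3 (bv n) - esym 1 (bv n) * esym 3 (av n)
        + esym 2 (av n) * esym 2 (bv n)
        - esym 1 (av n) * esym 1 (bv n) * esym 1 (fun i => av n i * bv n i)
        + esym 1 (fun i => av n i * bv n i) * esym 2 (av n)
        + esym 1 (fun i => av n i * bv n i) * esym 2 (bv n)
        - esym 1 (av n) * esym 1 (fun i => av n i ^ 2 * bv n i)
        + esym 1 (av n) * esym 1 (fun i => av n i * bv n i ^ 2)
        + esym 1 (bv n) * esym 1 (fun i => av n i ^ 2 * bv n i)
        - esym 1 (bv n) * esym 1 (fun i => av n i * bv n i ^ 2)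
        + esym 1 (fun i => av n i ^ 3 * bv n i)
        - esym 1 (fun i => av n i ^ 2 * bv n i ^ 2)
        + esym 1 (fun i => av n i * bv n i ^ 3)
        + esym 2 (fun i => av n i * bv n i) := by
  simp only [esym_eq_multiset_esymm, multiset_esymm_one]
  exact statement9_general Finset.univ.val (av n) (bv n)
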